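/- The connection W is a homothetically shrinking soliton: for every index j and every y ∈ ℝⁿ, Σ_i (∂_i F_{ij}(y) + [W_i(y), F_{ij}(y)]) = (1/2)·Σ_i y_i F_{ij}(y); equivalently, the curvature of W satisfies D_W*F_W + (1/2) y·F_W = 0, where D_W* is the formal adjoint of the covariant differential associated with W and y· denotes interior product with the position vector. -/

import Mathlib

open scoped BigOperators

noncomputable section

/-- Euclidean space `ℝⁿ`. -/
abbrev En (n : ℕ) := EuclideanSpace ℝ (Fin n)

/-- `n × n` real matrices, represented entrywise. -/
abbrev Mat (n : ℕ) := Fin n → Fin n → ℝ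

variable {n : ℕ}

/-- Frobenius inner product `⟨A,B⟩_F = tr(AᵀB) = Σ_{μν} A_{μν} B_{μν}`. -/
def fipE (A B : Mat n) : ℝ := ∑ μ, ∑ ν, A μ ν * B μ ν

/-- Frobenius norm. -/
def fnormE (A : Mat n) : ℝ := Real.sqrt (fipE A A)

/-- Matrix commutator `[A, B] = AB − BA`, entrywise. -/
def brkt (A B : Mat n) : Mat n := fun μ ν => ∑ k, (A μ k * B k ν - B μ k * A k ν)

/-- `A` is skew-symmetric. -/
def skewM (A : Mat n) : Prop := ∀ μ ν, A ν μ = -A μ ν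

/-- Partial derivative `∂_i f` of a scalar function on `ℝⁿ`. -/
def pder (i : Fin n) (f : En n → ℝ) (y : En n) : ℝ :=
  fderiv ℝ f y (EuclideanSpace.single i 1)

/-- Euclidean Laplacian `Δf = Σ_i ∂_i ∂_i f` of a scalar function on `ℝⁿ`. -/
def lapS (f : En n → ℝ) (y : En n) : ℝ := ∑ i, pder i (fun z => pder i f z) y

/-- Componentwise partial derivative `∂_i u` of a matrix-valued function on `ℝⁿ`. -/
def pderM (i : Fin n) (u : En n → Mat n) (y : En n) : Mat n :=
  fun μ ν => pder i (fun z => u z μ ν) y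

/-- Componentwise Laplacian `Δu` of a matrix-valued function on `ℝⁿ`. -/
def lapM (u : En n → Mat n) (y : En n) : Mat n := fun μ ν => lapS (fun z => u z μ ν) y

/-- The constant `a = √(n−2)/(2√2)`. -/
def aC (n : ℕ) : ℝ := Real.sqrt ((n : ℝ) - 2) / (2 * Real.sqrt 2)

/-- The constant `b = (1/2)(6n − 12 − (n+2)√(2n−4))`. -/
def bC (n : ℕ) : ℝ := (1 / 2) * (6 * (n : ℝ) - 12 - ((n : ℝ) + 2) * Real.sqrt (2 * (n : ℝ) - 4))

/-- `σ_i(y)`, the skew matrix with entries `(σ_i(y))^μ_ν = δ_{iν} y^μ − δ_{iμ} y^ν`. -/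
def sigmaM (i : Fin n) (y : En n) : Mat n :=
  fun μ ν => (if i = ν then y μ else 0) - (if i = μ then y ν else 0)

/-- The soliton connection `W_i(y) = σ_i(y)/(a|y|² + b)`. -/
def Wc (i : Fin n) (y : En n) : Mat n :=
  fun μ ν => sigmaM i y μ ν / (aC n * ‖y‖ ^ 2 + bC n)

/-- The curvature `F_{ij} = ∂_i W_j − ∂_j W_i + [W_i, W_j]` of the soliton connection `W`. -/
def Fc (i j : Fin n) (y : En n) : Mat n :=
  pderM i (Wc j) y - pderM j (Wc i) y + brkt (Wc i y) (Wc j y)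

/-- The linearized operator `L` of the rescaled Yang–Mills de Turck flow at the soliton `W`:
`(Lu)_j = Δu_j − (1/2)Σ_i y_i ∂_i u_j − (1/2)u_j + 2Σ_i [W_i, ∂_i u_j]
  + Σ_i [W_i, [W_i, u_j]] + 2Σ_i [u_i, F_{ij}]`. -/
def Lop (u : En n → Fin n → Mat n) (y : En n) (j : Fin n) : Mat n :=
  lapM (fun z => u z j) y
    - (1 / 2 : ℝ) • (∑ i, y i • pderM i (fun z => u z j) y)
    - (1 / 2 : ℝ) • u y j
    + (2 : ℝ) • ∑ i, brkt (Wc i y) (pderM i (fun z => u z j) y)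
    + ∑ i, brkt (Wc i y) (brkt (Wc i y) (u y j))
    + (2 : ℝ) • ∑ i, brkt (u y i) (Fc i j y)

/-- Squared Frobenius norm of a tuple of matrices: `‖u‖_F² = Σ_j ‖u_j‖_F²`. -/
def tnormSq (v : Fin n → Mat n) : ℝ := ∑ j, fipE (v j) (v j)

/-- The Gaussian weight `ρ(y) = e^{−|y|²/4}`. -/
def gauss (y : En n) : ℝ := Real.exp (-‖y‖ ^ 2 / 4)

end

/-! The connection `W_i = f(|y|²) y ∧ e_i` is `O(n)`-equivariant, so its curvature has the form
`P(|y|²) e_i ∧ e_j + Q(|y|²) (y_i y ∧ e_j - y_j y ∧ e_i)`, and the covariant divergence of such a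
two-form, as well as its contraction with `y`, is a radial multiple of `y ∧ e_j`. The soliton
equation therefore reduces to the ordinary differential equation
`4 r f'' + (2n + 4) f' + (n - 2) (3 f² - r f³) = f + r f'` in `r = |y|²`. For `f = 1 / (a r + b)`,
multiplying by `(a r + b)³` leaves a polynomial identity in `r`, which follows from
`8 a² = n - 2` and `b = 3 (n - 2) - 2 (n + 2) a`. -/

open Filter Topology

noncomputable section

local notation:max "𝐞" i:max => EuclideanSpace.single i (1 : ℝ)

variable {n : ℕ} {y : En n}

/-- The matrix `x ∧ y = x yᵀ - y xᵀ`, as a bilinear map. With it `σ_i(y) = y ∧ e_i`. -/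
def wedge : En n →ₗ[ℝ] En n →ₗ[ℝ] Mat n :=
  LinearMap.mk₂ ℝ (fun x y μ ν => x μ * y ν - y μ * x ν)
    (fun _ _ _ => by ext; simp only [PiLp.add_apply, Pi.add_apply]; ring)
    (fun _ _ _ => by ext; simp only [PiLp.smul_apply, Pi.smul_apply, smul_eq_mul]; ring)
    (fun _ _ _ => by ext; simp only [PiLp.add_apply, Pi.add_apply]; ring)
    (fun _ _ _ => by ext; simp only [PiLp.smul_apply, Pi.smul_apply, smul_eq_mul]; ring)

lemma wedge_apply (x y : En n) (μ ν : Fin n) : wedge x y μ ν = x μ * y ν - y μ * x ν := rfl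

lemma wedge_self (x : En n) : wedge x x = 0 := by
  ext μ ν
  simp [wedge_apply]

lemma wedge_swap (x y : En n) : wedge y x = -wedge x y := by
  ext μ ν
  simp [wedge_apply]

/-- The commutator `brkt` as a bilinear map, so that the lemmas on linear maps apply to it. -/
def brktₗ : Mat n →ₗ[ℝ] Mat n →ₗ[ℝ] Mat n :=
  LinearMap.mul ℝ (Matrix (Fin n) (Fin n) ℝ) - (LinearMap.mul ℝ (Matrix (Fin n) (Fin n) ℝ)).flip

lemma brktₗ_apply (A B : Mat n) : brktₗ A B = brkt A B := by
  ext μ ν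
  simp only [brkt, Finset.sum_sub_distrib]
  rfl

lemma brkt_wedge_wedge (x y z w : En n) :
    brkt (wedge x y) (wedge z w) =
      inner ℝ y z • wedge x w - inner ℝ y w • wedge x z
        - inner ℝ x z • wedge y w + inner ℝ x w • wedge y z := by
  ext μ ν
  simp only [brkt, wedge_apply, PiLp.inner_apply, RCLike.inner_apply, conj_trivial,
    Pi.add_apply, Pi.sub_apply, Pi.smul_apply, smul_eq_mul, Finset.sum_mul,
    ← Finset.sum_add_distrib, ← Finset.sum_sub_distrib]
  congr! 1
  ring

lemma brkt_wedge_single_wedge_single (y : En n) (i j : Fin n) :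
    brkt (wedge y (𝐞 i)) (wedge y (𝐞 j)) =
      y i • wedge y (𝐞 j) - y j • wedge y (𝐞 i) - ‖y‖ ^ 2 • wedge (𝐞 i) (𝐞 j) := by
  simp only [brkt_wedge_wedge, wedge_self, wedge_swap y (𝐞 i), real_inner_self_eq_norm_sq,
    EuclideanSpace.inner_single_left, EuclideanSpace.inner_single_right, conj_trivial]
  module

lemma brkt_wedge_single_single_wedge_single (y : En n) (i j : Fin n) :
    brkt (wedge y (𝐞 i)) (wedge (𝐞 i) (𝐞 j)) =
      wedge y (𝐞 j) - (𝐞 i : En n) j • wedge y (𝐞 i) - y i • wedge (𝐞 i) (𝐞 j) := by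
  simp only [brkt_wedge_wedge, wedge_self, PiLp.single_eq_same,
    EuclideanSpace.inner_single_right, conj_trivial]
  module

lemma sum_smul_single (y : En n) : ∑ i, y i • 𝐞 i = y := by
  simpa using (EuclideanSpace.basisFun (Fin n) ℝ).sum_repr y

lemma sum_smul_wedge_single (y v : En n) : ∑ i, y i • wedge (𝐞 i) v = wedge y v := by
  conv_rhs => rw [← sum_smul_single y]
  simp

lemma sum_smul_wedge_single_right (y v : En n) : ∑ i, y i • wedge v (𝐞 i) = wedge v y := by
  conv_rhs => rw [← sum_smul_single y]
  simp

lemma sum_single_apply_smul {E : Type*} [AddCommGroup E] [Module ℝ E] (j : Fin n) (g : Fin n → E) :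
    ∑ i, (𝐞 i : En n) j • g i = g j := by
  simp

lemma pderM_eq_of_hasFDerivAt {i : Fin n} {u : En n → Mat n} {u' : En n →L[ℝ] Mat n}
    (hu : HasFDerivAt u u' y) : pderM i u y = u' (𝐞 i) := by
  ext μ ν
  have hentry := hasFDerivAt_pi'.1 (hasFDerivAt_pi'.1 hu μ) ν
  rw [pderM, pder, hentry.fderiv]
  rfl

lemma pderM_congr_of_eventuallyEq {i : Fin n} {u v : En n → Mat n} (h : u =ᶠ[𝓝 y] v) :
    pderM i u y = pderM i v y := by
  ext μ ν
  have hentry : (fun z => u z μ ν) =ᶠ[𝓝 y] fun z => v z μ ν :=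
    h.mono fun z hz => by simp only [hz]
  simp only [pderM, pder, hentry.fderiv_eq]

lemma hasFDerivAt_radial {f : ℝ → ℝ} {f' : ℝ} (hf : HasDerivAt f f' (‖y‖ ^ 2)) :
    HasFDerivAt (fun z : En n => f (‖z‖ ^ 2)) (f' • (2 : ℕ) • innerSL ℝ y) y :=
  hf.comp_hasFDerivAt y (hasStrictFDerivAt_norm_sq y).hasFDerivAt

lemma hasFDerivAt_wedge_const (v : En n) :
    HasFDerivAt (fun z => wedge z v) (wedge.flip v).toContinuousLinearMap y :=
  (wedge.flip v).toContinuousLinearMap.hasFDerivAt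

lemma hasFDerivAt_coord_smul_wedge (i : Fin n) (v : En n) :
    HasFDerivAt (fun z : En n => z i • wedge z v)
      (y i • (wedge.flip v).toContinuousLinearMap
        + (EuclideanSpace.proj (𝕜 := ℝ) i).smulRight (wedge y v)) y :=
  (EuclideanSpace.proj (𝕜 := ℝ) i).hasFDerivAt.smul (hasFDerivAt_wedge_const v)

/-- The curvature `∂_i A_j - ∂_j A_i + [A_i, A_j]` of a connection with components `A_i`. -/
def curvature (A : Fin n → En n → Mat n) (i j : Fin n) (y : En n) : Mat n :=
  pderM i (A j) y - pderM j (A i) y + brkt (A i y) (A j y)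

/-- The connection `f(|y|²) y ∧ e_i` with radial profile `f`, written as a function of `|y|²`. -/
def radialConnection (f : ℝ → ℝ) (i : Fin n) (y : En n) : Mat n :=
  f (‖y‖ ^ 2) • wedge y (𝐞 i)

/-- The equivariant matrix-valued two-form
`P(|y|²) e_i ∧ e_j + Q(|y|²) (y_i y ∧ e_j - y_j y ∧ e_i)`. -/
def radialTwoForm (P Q : ℝ → ℝ) (i j : Fin n) (y : En n) : Mat n :=
  P (‖y‖ ^ 2) • wedge (𝐞 i) (𝐞 j) + Q (‖y‖ ^ 2) • (y i • wedge y (𝐞 j) - y j • wedge y (𝐞 i))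

lemma pderM_radialConnection {f : ℝ → ℝ} {f' : ℝ} (i j : Fin n)
    (hf : HasDerivAt f f' (‖y‖ ^ 2)) :
    pderM i (radialConnection f j) y =
      f (‖y‖ ^ 2) • wedge (𝐞 i) (𝐞 j) + (2 * f' * y i) • wedge y (𝐞 j) := by
  have hW := (hasFDerivAt_radial hf).smul (hasFDerivAt_wedge_const (𝐞 j))
  refine (pderM_eq_of_hasFDerivAt hW).trans ?_
  simp only [add_apply, smul_apply, LinearMap.coe_toContinuousLinearMap', LinearMap.flip_apply,
    ContinuousLinearMap.smulRight_apply, coe_innerSL_apply, EuclideanSpace.inner_single_right,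
    conj_trivial]
  module

lemma brkt_radialConnection (f : ℝ → ℝ) (i j : Fin n) (y : En n) :
    brkt (radialConnection f i y) (radialConnection f j y) =
      f (‖y‖ ^ 2) ^ 2 • (y i • wedge y (𝐞 j) - y j • wedge y (𝐞 i)
        - ‖y‖ ^ 2 • wedge (𝐞 i) (𝐞 j)) := by
  simp only [radialConnection, ← brktₗ_apply, map_smul, LinearMap.smul_apply]
  rw [brktₗ_apply, brkt_wedge_single_wedge_single]
  module

lemma curvature_radialConnection {f f' : ℝ → ℝ} (i j : Fin n)
    (hf : HasDerivAt f (f' (‖y‖ ^ 2)) (‖y‖ ^ 2)) :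
    curvature (radialConnection f) i j y =
      radialTwoForm (fun r => 2 * f r - r * f r ^ 2) (fun r => 2 * f' r + f r ^ 2) i j y := by
  rw [curvature, radialTwoForm, pderM_radialConnection i j hf, pderM_radialConnection j i hf,
    brkt_radialConnection, wedge_swap (𝐞 i) (𝐞 j)]
  module

lemma pderM_radialTwoForm {P Q : ℝ → ℝ} {P' Q' : ℝ} (i j : Fin n)
    (hP : HasDerivAt P P' (‖y‖ ^ 2)) (hQ : HasDerivAt Q Q' (‖y‖ ^ 2)) :
    pderM i (radialTwoForm P Q i j) y =
      (2 * P' + Q (‖y‖ ^ 2)) • y i • wedge (𝐞 i) (𝐞 j)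
        + (2 * Q' * y i ^ 2) • wedge y (𝐞 j) - (2 * Q' * y j) • y i • wedge y (𝐞 i)
        + Q (‖y‖ ^ 2) • (wedge y (𝐞 j) - (𝐞 i : En n) j • wedge y (𝐞 i)) := by
  have hF := ((hasFDerivAt_radial hP).smul_const (wedge (𝐞 i) (𝐞 j))).add
    ((hasFDerivAt_radial hQ).smul ((hasFDerivAt_coord_smul_wedge i (𝐞 j)).sub
      (hasFDerivAt_coord_smul_wedge j (𝐞 i))))
  refine (pderM_eq_of_hasFDerivAt hF).trans ?_
  simp only [Pi.sub_apply, add_apply, sub_apply, smul_apply, ContinuousLinearMap.smulRight_apply,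
    coe_innerSL_apply, EuclideanSpace.inner_single_right, conj_trivial, PiLp.proj_apply,
    LinearMap.coe_toContinuousLinearMap', LinearMap.flip_apply, PiLp.single_eq_same, wedge_self]
  module

lemma sum_pderM_radialTwoForm {P Q : ℝ → ℝ} {P' Q' : ℝ} (j : Fin n)
    (hP : HasDerivAt P P' (‖y‖ ^ 2)) (hQ : HasDerivAt Q Q' (‖y‖ ^ 2)) :
    ∑ i, pderM i (radialTwoForm P Q i j) y =
      (2 * P' + 2 * ‖y‖ ^ 2 * Q' + n * Q (‖y‖ ^ 2)) • wedge y (𝐞 j) := by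
  simp only [pderM_radialTwoForm _ j hP hQ, Finset.sum_add_distrib, Finset.sum_sub_distrib,
    ← Finset.smul_sum, ← Finset.sum_smul, ← Finset.mul_sum, sum_smul_wedge_single,
    sum_smul_wedge_single_right, wedge_self, sum_single_apply_smul,
    ← EuclideanSpace.real_norm_sq_eq, Finset.sum_const, Finset.card_univ, Fintype.card_fin]
  module

lemma sum_smul_radialTwoForm (P Q : ℝ → ℝ) (j : Fin n) (y : En n) :
    ∑ i, y i • radialTwoForm P Q i j y =
      (P (‖y‖ ^ 2) + ‖y‖ ^ 2 * Q (‖y‖ ^ 2)) • wedge y (𝐞 j) := by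
  have hterm (i : Fin n) : y i • radialTwoForm P Q i j y =
      P (‖y‖ ^ 2) • y i • wedge (𝐞 i) (𝐞 j) + (Q (‖y‖ ^ 2) * y i ^ 2) • wedge y (𝐞 j)
        - (Q (‖y‖ ^ 2) * y j) • y i • wedge y (𝐞 i) := by
    rw [radialTwoForm]
    module
  simp only [hterm, Finset.sum_add_distrib, Finset.sum_sub_distrib, ← Finset.smul_sum,
    ← Finset.sum_smul, ← Finset.mul_sum, sum_smul_wedge_single, sum_smul_wedge_single_right,
    wedge_self, ← EuclideanSpace.real_norm_sq_eq]
  module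

lemma brkt_radialConnection_radialTwoForm (f P Q : ℝ → ℝ) (i j : Fin n) (y : En n) :
    brkt (radialConnection f i y) (radialTwoForm P Q i j y) =
      (f (‖y‖ ^ 2) * P (‖y‖ ^ 2)) •
          (wedge y (𝐞 j) - (𝐞 i : En n) j • wedge y (𝐞 i) - y i • wedge (𝐞 i) (𝐞 j))
        + (f (‖y‖ ^ 2) * Q (‖y‖ ^ 2)) •
          (y i ^ 2 • wedge y (𝐞 j) - y j • y i • wedge y (𝐞 i)
            - ‖y‖ ^ 2 • y i • wedge (𝐞 i) (𝐞 j)) := by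
  simp only [radialConnection, radialTwoForm, ← brktₗ_apply, map_smul, map_add, map_sub,
    LinearMap.smul_apply]
  simp only [brktₗ_apply, brkt_wedge_single_wedge_single, brkt_wedge_single_single_wedge_single,
    wedge_self]
  module

lemma sum_brkt_radialConnection_radialTwoForm (f P Q : ℝ → ℝ) (j : Fin n) (y : En n) :
    ∑ i, brkt (radialConnection f i y) (radialTwoForm P Q i j y) =
      ((n - 2) * f (‖y‖ ^ 2) * P (‖y‖ ^ 2)) • wedge y (𝐞 j) := by
  simp only [brkt_radialConnection_radialTwoForm, Finset.sum_add_distrib, Finset.sum_sub_distrib,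
    ← Finset.smul_sum, ← Finset.sum_smul, sum_smul_wedge_single,
    sum_smul_wedge_single_right, wedge_self, sum_single_apply_smul,
    ← EuclideanSpace.real_norm_sq_eq, Finset.sum_const, Finset.card_univ, Fintype.card_fin]
  module

/-- The covariant divergence `∑ i, (∂_i F_{ij} + [A_i, F_{ij}])` of the curvature `F` of `A`. -/
def curvatureDivergence (A : Fin n → En n → Mat n) (j : Fin n) (y : En n) : Mat n :=
  ∑ i, (pderM i (curvature A i j) y + brkt (A i y) (curvature A i j y))

lemma curvatureDivergence_radialConnection {f f' : ℝ → ℝ} {f'' : ℝ} (j : Fin n)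
    (hf : ∀ᶠ r in 𝓝 (‖y‖ ^ 2), HasDerivAt f (f' r) r) (hf' : HasDerivAt f' f'' (‖y‖ ^ 2)) :
    curvatureDivergence (radialConnection f) j y =
      (4 * ‖y‖ ^ 2 * f'' + (2 * n + 4) * f' (‖y‖ ^ 2)
        + (n - 2) * (3 * f (‖y‖ ^ 2) ^ 2 - ‖y‖ ^ 2 * f (‖y‖ ^ 2) ^ 3)) • wedge y (𝐞 j) := by
  have hfy := hf.self_of_nhds
  have hcurv (i : Fin n) : curvature (radialConnection f) i j =ᶠ[𝓝 y]
      radialTwoForm (fun r => 2 * f r - r * f r ^ 2) (fun r => 2 * f' r + f r ^ 2) i j := by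
    have hnorm : Tendsto (fun z : En n => ‖z‖ ^ 2) (𝓝 y) (𝓝 (‖y‖ ^ 2)) :=
      (continuous_norm.pow 2).continuousAt
    exact (hnorm.eventually hf).mono fun z hz => curvature_radialConnection i j hz
  have hP : HasDerivAt (fun r => 2 * f r - r * f r ^ 2) _ (‖y‖ ^ 2) :=
    (hfy.const_mul 2).sub ((hasDerivAt_id' (‖y‖ ^ 2)).mul (hfy.fun_pow 2))
  have hQ : HasDerivAt (fun r => 2 * f' r + f r ^ 2) _ (‖y‖ ^ 2) :=
    (hf'.const_mul 2).add (hfy.fun_pow 2)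
  simp only [curvatureDivergence, Finset.sum_add_distrib, (hcurv _).self_of_nhds,
    pderM_congr_of_eventuallyEq (hcurv _), sum_brkt_radialConnection_radialTwoForm]
  rw [sum_pderM_radialTwoForm j hP hQ, ← add_smul]
  congr 1
  push_cast
  ring

lemma sum_smul_curvature_radialConnection {f f' : ℝ → ℝ} (j : Fin n)
    (hf : HasDerivAt f (f' (‖y‖ ^ 2)) (‖y‖ ^ 2)) :
    ∑ i, y i • curvature (radialConnection f) i j y =
      (2 * f (‖y‖ ^ 2) + 2 * ‖y‖ ^ 2 * f' (‖y‖ ^ 2)) • wedge y (𝐞 j) := by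
  simp only [curvature_radialConnection _ j hf, sum_smul_radialTwoForm]
  congr 1
  ring

lemma curvatureDivergence_radialConnection_eq_of_ode {f f' : ℝ → ℝ} {f'' : ℝ} (j : Fin n)
    (hf : ∀ᶠ r in 𝓝 (‖y‖ ^ 2), HasDerivAt f (f' r) r) (hf' : HasDerivAt f' f'' (‖y‖ ^ 2))
    (hode : 4 * ‖y‖ ^ 2 * f'' + (2 * n + 4) * f' (‖y‖ ^ 2)
        + (n - 2) * (3 * f (‖y‖ ^ 2) ^ 2 - ‖y‖ ^ 2 * f (‖y‖ ^ 2) ^ 3) =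
      f (‖y‖ ^ 2) + ‖y‖ ^ 2 * f' (‖y‖ ^ 2)) :
    curvatureDivergence (radialConnection f) j y =
      (1 / 2 : ℝ) • ∑ i, y i • curvature (radialConnection f) i j y := by
  rw [curvatureDivergence_radialConnection j hf hf', hode,
    sum_smul_curvature_radialConnection j hf.self_of_nhds]
  module

lemma aC_nonneg (n : ℕ) : 0 ≤ aC n := by
  unfold aC
  positivity

lemma eight_mul_aC_sq (hn : 2 ≤ n) : 8 * aC n ^ 2 = n - 2 := by
  have hn2 : (0 : ℝ) ≤ n - 2 := by simpa using hn
  rw [aC, div_pow, mul_pow, Real.sq_sqrt hn2, Real.sq_sqrt zero_le_two]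
  ring

lemma bC_eq (n : ℕ) : bC n = 3 * (n - 2) - 2 * (n + 2) * aC n := by
  have hsqrt : √(2 * (n : ℝ) - 4) = 4 * aC n := by
    rw [show 2 * (n : ℝ) - 4 = 2 * (n - 2) by ring, Real.sqrt_mul zero_le_two, aC]
    field_simp
    rw [Real.sq_sqrt zero_le_two]
    ring
  rw [bC, hsqrt]
  ring

lemma bC_pos (hn : 5 ≤ n) (hn' : n ≤ 9) : 0 < bC n := by
  have hnℝ : (5 : ℝ) ≤ n := by exact_mod_cast hn
  have hnℝ' : (n : ℝ) ≤ 9 := by exact_mod_cast hn'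
  have hsq : (2 * (n + 2) * aC n) ^ 2 < (3 * (n - 2 : ℝ)) ^ 2 := by
    have hfactor : (3 * (n - 2 : ℝ)) ^ 2 - (2 * (n + 2) * aC n) ^ 2
        = (n - 2) * (n - 4) * (10 - n) / 2 := by
      linear_combination -(n + 2 : ℝ) ^ 2 / 2 * eight_mul_aC_sq (by lia : 2 ≤ n)
    have : 0 < (n - 2 : ℝ) * (n - 4) * (10 - n) :=
      mul_pos (mul_pos (by linarith) (by linarith)) (by linarith)
    linarith
  rw [bC_eq]
  linarith [lt_of_pow_lt_pow_left₀ 2 (by linarith) hsq]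

lemma Wc_eq_radialConnection :
    Wc = radialConnection (n := n) fun r => (aC n * r + bC n)⁻¹ := by
  ext i y μ ν
  simp [Wc, sigmaM, radialConnection, wedge_apply, div_eq_inv_mul, eq_comm]

lemma soliton_profile_ode {K : Type*} [Field K] {N a b r : K} (ha : 8 * a ^ 2 = N - 2)
    (hb : b = 3 * (N - 2) - 2 * (N + 2) * a) (hr : a * r + b ≠ 0) :
    4 * r * (2 * a ^ 2 * (a * r + b)⁻¹ ^ 3) + (2 * N + 4) * (-a * (a * r + b)⁻¹ ^ 2)
        + (N - 2) * (3 * (a * r + b)⁻¹ ^ 2 - r * (a * r + b)⁻¹ ^ 3) =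
      (a * r + b)⁻¹ + r * (-a * (a * r + b)⁻¹ ^ 2) := by
  have hpoly : 8 * a ^ 2 * r - (2 * N + 4) * a * (a * r + b)
      + (N - 2) * (3 * (a * r + b) - r) = b * (a * r + b) := by
    linear_combination r * ha - (a * r + b) * hb
  have hr' : r * a + b ≠ 0 := by rwa [mul_comm r]
  field_simp
  linear_combination hpoly

lemma hasDerivAt_inv_affine {𝕜 : Type*} [NontriviallyNormedField 𝕜] {a b r : 𝕜}
    (hr : a * r + b ≠ 0) :
    HasDerivAt (fun s => (a * s + b)⁻¹) (-a * (a * r + b)⁻¹ ^ 2) r := by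
  have haffine : HasDerivAt (fun s => a * s + b) a r := by
    simpa using ((hasDerivAt_id r).const_mul a).add_const b
  exact (haffine.fun_inv hr).congr_deriv (by rw [div_eq_mul_inv, inv_pow])

end

theorem W_is_shrinking_soliton_general (n : ℕ) (hn : 2 ≤ n) (j : Fin n) (y : En n)
    (hy : aC n * ‖y‖ ^ 2 + bC n ≠ 0) :
    ∑ i, (pderM i (Fc i j) y + brkt (Wc i y) (Fc i j y))
      = (1 / 2 : ℝ) • ∑ i, y i • Fc i j y := by
  let f' (r : ℝ) : ℝ := -aC n * (aC n * r + bC n)⁻¹ ^ 2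
  have hf : ∀ᶠ r in 𝓝 (‖y‖ ^ 2), HasDerivAt (fun s => (aC n * s + bC n)⁻¹) (f' r) r := by
    have hcont : Continuous fun r => aC n * r + bC n := by fun_prop
    exact (hcont.continuousAt.eventually_ne hy).mono fun r hr => hasDerivAt_inv_affine hr
  have hf' : HasDerivAt f' (2 * aC n ^ 2 * (aC n * ‖y‖ ^ 2 + bC n)⁻¹ ^ 3) (‖y‖ ^ 2) :=
    (((hasDerivAt_inv_affine hy).fun_pow 2).const_mul (-aC n)).congr_deriv (by push_cast; ring)
  change curvatureDivergence Wc j y = (1 / 2 : ℝ) • ∑ i, y i • curvature Wc i j y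
  rw [Wc_eq_radialConnection]
  exact curvatureDivergence_radialConnection_eq_of_ode j hf hf'
    (soliton_profile_ode (eight_mul_aC_sq hn) (bC_eq n) hy)

/-- The connection `W` is a homothetically shrinking soliton: for every `j` and `y ∈ ℝⁿ`,
`Σ_i (∂_i F_{ij}(y) + [W_i(y), F_{ij}(y)]) = (1/2)·Σ_i y_i F_{ij}(y)`; equivalently
`D_W* F_W + (1/2) y·F_W = 0`. -/
theorem W_is_shrinking_soliton (n : ℕ) (hn : 5 ≤ n) (hn' : n ≤ 9) (j : Fin n) (y : En n) :
    ∑ i, (pderM i (Fc i j) y + brkt (Wc i y) (Fc i j y))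
      = (1 / 2 : ℝ) • ∑ i, y i • Fc i j y := by
  have ha := aC_nonneg n
  have hb := bC_pos hn hn'
  exact W_is_shrinking_soliton_general n (by lia) j y (by positivity)
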